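/- Internalization of logical equivalence in LPQ⊃,F: for all formulas A1, A2 of LPQ⊃,F(Σ), A1 ≡ A2 (logical equivalence) if and only if ⊨ (A1 ↔ A2) ∧ (¬A1 ↔ ¬A2), where A ↔ B abbreviates (A ⊃ B) ∧ (B ⊃ A). -/

import Mathlib

namespace LPQ

/-- The three truth values: true, false, both-true-and-false. -/
inductive TV : Type where
  | t : TV
  | f : TV
  | b : TV
deriving DecidableEq

/-- A first-order signature: function symbols and predicate symbols of each arity. -/
structure Signature : Type 1 where
  Func : ℕ → Type
  Pred : ℕ → Type

/-- Terms over a signature (variables are natural numbers). -/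
inductive Term (σ : Signature) : Type where
  | var : ℕ → Term σ
  | func : {n : ℕ} → σ.Func n → (Fin n → Term σ) → Term σ

/-- Formulas of LPQ⊃,F over a signature. -/
inductive Formula (σ : Signature) : Type where
  | falsum : Formula σ
  | pred : {n : ℕ} → σ.Pred n → (Fin n → Term σ) → Formula σ
  | eq : Term σ → Term σ → Formula σ
  | neg : Formula σ → Formula σ
  | and : Formula σ → Formula σ → Formula σ
  | or : Formula σ → Formula σ → Formula σ
  | imp : Formula σ → Formula σ → Formula σ
  | all : ℕ → Formula σ → Formula σ
  | ex : ℕ → Formula σ → Formula σ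

variable {σ : Signature}

/-- Free variables of a term. -/
def Term.fv : Term σ → Set ℕ
  | .var x => {x}
  | .func _ ts => ⋃ i, (ts i).fv

/-- Free variables of a formula. -/
def Formula.fv : Formula σ → Set ℕ
  | .falsum => ∅
  | .pred _ ts => ⋃ i, (ts i).fv
  | .eq u v => u.fv ∪ v.fv
  | .neg A => A.fv
  | .and A B => A.fv ∪ B.fv
  | .or A B => A.fv ∪ B.fv
  | .imp A B => A.fv ∪ B.fv
  | .all x A => A.fv \ {x}
  | .ex x A => A.fv \ {x}

/-- A structure of LPQ⊃,F(σ): a nonempty domain, interpretations of the function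
symbols, three-valued interpretations of the predicate symbols, and a three-valued
interpretation of equality which is designated on the diagonal. -/
structure Structure (σ : Signature) : Type 1 where
  Dom : Type
  nonempty : Nonempty Dom
  interpFunc : {n : ℕ} → σ.Func n → (Fin n → Dom) → Dom
  interpPred : {n : ℕ} → σ.Pred n → (Fin n → Dom) → TV
  interpEq : Dom → Dom → TV
  interpEq_refl : ∀ d, interpEq d d = TV.t ∨ interpEq d d = TV.b

/-- Value of a term in a structure under an assignment. -/
def Term.eval (M : Structure σ) (α : ℕ → M.Dom) : Term σ → M.Dom
  | .var x => α x
  | .func f ts => M.interpFunc f (fun i => (ts i).eval M α)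

open Classical in
/-- The three-valued interpretation of formulas of LPQ⊃,F. -/
noncomputable def Formula.eval (M : Structure σ) : (ℕ → M.Dom) → Formula σ → TV
  | α, .pred P ts => M.interpPred P (fun i => (ts i).eval M α)
  | α, .eq u v => M.interpEq (u.eval M α) (v.eval M α)
  | _, .falsum => TV.f
  | α, .neg A =>
      match A.eval M α with
      | TV.t => TV.f
      | TV.f => TV.t
      | TV.b => TV.b
  | α, .and A B =>
      match A.eval M α, B.eval M α with
      | TV.t, TV.t => TV.t
      | TV.f, _ => TV.f
      | _, TV.f => TV.f
      | _, _ => TV.b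
  | α, .or A B =>
      match A.eval M α, B.eval M α with
      | TV.t, _ => TV.t
      | _, TV.t => TV.t
      | TV.f, TV.f => TV.f
      | _, _ => TV.b
  | α, .imp A B =>
      match A.eval M α, B.eval M α with
      | TV.f, _ => TV.t
      | _, TV.t => TV.t
      | _, TV.f => TV.f
      | _, _ => TV.b
  | α, .all x A =>
      if ∀ d, Formula.eval M (Function.update α x d) A = TV.t then TV.t
      else if ∃ d, Formula.eval M (Function.update α x d) A = TV.f then TV.f
      else TV.b
  | α, .ex x A =>
      if ∃ d, Formula.eval M (Function.update α x d) A = TV.t then TV.t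
      else if ∀ d, Formula.eval M (Function.update α x d) A = TV.f then TV.f
      else TV.b

/-- Logical consequence of LPQ⊃,F: in every structure under every assignment,
either some premise is false or the conclusion is true or both-true-and-false. -/
def LCon (Γ : Set (Formula σ)) (A : Formula σ) : Prop :=
  ∀ (M : Structure σ) (α : ℕ → M.Dom),
    (∃ B ∈ Γ, B.eval M α = TV.f) ∨ (A.eval M α = TV.t ∨ A.eval M α = TV.b)

/-- Logical equivalence of LPQ⊃,F: the same truth value in every structure
under every assignment. -/
def LEqv (A1 A2 : Formula σ) : Prop :=
  ∀ (M : Structure σ) (α : ℕ → M.Dom), A1.eval M α = A2.eval M α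

end LPQ

namespace LPQ

/-- Bi-implication A ↔ B, as the abbreviation (A ⊃ B) ∧ (B ⊃ A). -/
def Formula.biimp {σ : Signature} (A B : Formula σ) : Formula σ :=
  (A.imp B).and (B.imp A)

/-- The designated truth values, the at least true ones, which logical consequence is about. -/
def TV.Designated (v : TV) : Prop :=
  v = TV.t ∨ v = TV.b

/-- Since `v ≠ t` says that the negation of `v` is designated, the values are separated by the
designation of a value and of its negation; designation alone does not tell `t` from `b`. -/
theorem TV.eq_iff_designated_iff_and_ne_t_iff {v w : TV} :
    v = w ↔ (v.Designated ↔ w.Designated) ∧ (v ≠ TV.t ↔ w ≠ TV.t) := by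
  cases v <;> cases w <;> simp [TV.Designated]

theorem lCon_empty_iff {σ : Signature} {A : Formula σ} :
    LCon ∅ A ↔ ∀ (M : Structure σ) (α : ℕ → M.Dom), (A.eval M α).Designated := by
  simp [LCon, TV.Designated]

namespace Formula

variable {σ : Signature} {M : Structure σ} {α : ℕ → M.Dom} {A B : Formula σ}

theorem designated_eval_neg : (A.neg.eval M α).Designated ↔ A.eval M α ≠ TV.t := by
  rw [eval]
  cases A.eval M α <;> simp [TV.Designated]

theorem designated_eval_and :
    ((A.and B).eval M α).Designated ↔ (A.eval M α).Designated ∧ (B.eval M α).Designated := by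
  rw [eval]
  cases A.eval M α <;> cases B.eval M α <;> simp [TV.Designated]

theorem designated_eval_imp :
    ((A.imp B).eval M α).Designated ↔ ((A.eval M α).Designated → (B.eval M α).Designated) := by
  rw [eval]
  cases A.eval M α <;> cases B.eval M α <;> simp [TV.Designated]

theorem designated_eval_biimp :
    ((A.biimp B).eval M α).Designated ↔ ((A.eval M α).Designated ↔ (B.eval M α).Designated) := by
  rw [biimp, designated_eval_and, designated_eval_imp, designated_eval_imp]
  exact iff_def.symm

theorem designated_eval_biimp_and_biimp_neg :
    (((A.biimp B).and (A.neg.biimp B.neg)).eval M α).Designated ↔ A.eval M α = B.eval M α := by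
  rw [designated_eval_and, designated_eval_biimp, designated_eval_biimp, designated_eval_neg,
    designated_eval_neg, TV.eq_iff_designated_iff_and_ne_t_iff]

end Formula

/-- **Internalization of logical equivalence in LPQ⊃,F**: A1 ≡ A2 iff
⊨ (A1 ↔ A2) ∧ (¬A1 ↔ ¬A2). -/
theorem internalization_of_logical_equivalence (σ : Signature)
    (A1 A2 : Formula σ) :
    LEqv A1 A2 ↔ LCon ∅ ((A1.biimp A2).and (A1.neg.biimp A2.neg)) := by
  rw [lCon_empty_iff]
  exact forall₂_congr fun _ _ => Formula.designated_eval_biimp_and_biimp_neg.symm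

end LPQ
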